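/- Let f ∈ ℝ[x,y,z] be a real polynomial in three variables. Then f satisfies the four conditions (i) f(−x,−y,z) = f(x,y,z), (ii) z·∂f/∂y + x·∂f/∂z = 0, (iii) z·∂f/∂x + y·∂f/∂z = 0, and (iv) x·∂f/∂x − y·∂f/∂y = 0, if and only if f is a polynomial in xy − z²/2, i.e. there exists a one-variable polynomial p ∈ ℝ[t] such that f(x,y,z) = p(xy − z²/2). -/

import Mathlib

open MvPolynomial

namespace PoissonAux

noncomputable def Q : MvPolynomial (Fin 3) ℝ := X 0 * X 1 - MvPolynomial.C (1 / 2 : ℝ) * X 2 ^ 2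

noncomputable def E (a b c : ℕ) : Fin 3 →₀ ℕ := Finsupp.equivFunOnFinite.symm ![a, b, c]

lemma E0 (a b c : ℕ) : E a b c 0 = a := rfl
lemma E1 (a b c : ℕ) : E a b c 1 = b := rfl
lemma E2 (a b c : ℕ) : E a b c 2 = c := rfl

lemma eq_E (m : Fin 3 →₀ ℕ) : m = E (m 0) (m 1) (m 2) := by
  ext i; fin_cases i <;> rfl

lemma add0 (a b c : ℕ) : E a b c + Finsupp.single 0 1 = E (a+1) b c := by
  ext i; fin_cases i <;> simp [E]
lemma add1 (a b c : ℕ) : E a b c + Finsupp.single 1 1 = E a (b+1) c := by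
  ext i; fin_cases i <;> simp [E]
lemma add2 (a b c : ℕ) : E a b c + Finsupp.single 2 1 = E a b (c+1) := by
  ext i; fin_cases i <;> simp [E]

lemma mul_pos (i : Fin 3) (m : Fin 3 →₀ ℕ) (f : MvPolynomial (Fin 3) ℝ) :
    coeff (m + Finsupp.single i 1) (X i * f) = coeff m f := by
  rw [add_comm, coeff_X_mul]

lemma mul_zero' (i : Fin 3) (m : Fin 3 →₀ ℕ) (h : m i = 0) (f : MvPolynomial (Fin 3) ℝ) :
    coeff m (X i * f) = 0 := by
  rw [coeff_X_mul', if_neg]; simpa using h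

lemma co_pderiv (i : Fin 3) (m : Fin 3 →₀ ℕ) (f : MvPolynomial (Fin 3) ℝ) :
    coeff m (pderiv i f) = coeff (m + Finsupp.single i 1) f * (m i + 1) := by
  induction f using MvPolynomial.induction_on' with
  | monomial s a =>
    rw [pderiv_monomial, coeff_monomial, coeff_monomial]
    by_cases h : s = m + Finsupp.single i 1
    · subst h; simp
    · rw [if_neg h]
      split_ifs with h2
      · by_cases hs : s i = 0
        · simp [hs]
        · exfalso; apply h; rw [← h2]; ext j
          by_cases hj : j = i
          · subst hj; simp; omega
          · simp [Finsupp.single_apply, Ne.symm hj]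
      · simp
  | add p q hp hq => simp only [map_add, coeff_add, hp, hq]; ring

lemma euler (i : Fin 3) (m : Fin 3 →₀ ℕ) (f : MvPolynomial (Fin 3) ℝ) :
    coeff m (X i * pderiv i f) = m i * coeff m f := by
  by_cases h : m i = 0
  · rw [mul_zero' i m h, h]; simp
  · obtain ⟨n, rfl⟩ : ∃ n, m = n + Finsupp.single i 1 := by
      refine ⟨m - Finsupp.single i 1, ?_⟩
      ext j
      by_cases hj : j = i
      · subst hj; simp; omega
      · simp [Finsupp.single_apply, Ne.symm hj]
    rw [mul_pos, co_pderiv]; simp; ring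

lemma vanish (f : MvPolynomial (Fin 3) ℝ)
    (h2 : X 2 * pderiv 1 f + X 0 * pderiv 2 f = 0)
    (h4 : X 0 * pderiv 0 f - X 1 * pderiv 1 f = 0)
    (h0 : ∀ a, coeff (E a a 0) f = 0) : f = 0 := by
  have key : ∀ c a, coeff (E a a c) f = 0 := by
    intro c
    induction c using Nat.strong_induction_on with
    | _ c ih =>
      intro a
      match c, ih with
      | 0, _ => exact h0 a
      | 1, _ =>
        have := congrArg (coeff (E (a+1) a 0)) h2
        rw [coeff_add, mul_zero' 2 _ (E2 _ _ _), ← add0, mul_pos, co_pderiv, add2, E2] at this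
        simpa using this
      | c+2, ih =>
        have := congrArg (coeff (E (a+1) a (c+1))) h2
        rw [coeff_add, ← add2, mul_pos, add2, ← add0 a a (c+1), mul_pos, co_pderiv, co_pderiv, add1,
          add2, E2, ih c (by omega)] at this
        have h : ((c:ℝ) + 1 + 1) ≠ 0 := by positivity
        simpa [h] using this
  ext m
  rw [coeff_zero]
  by_cases h : m 0 = m 1
  · rw [eq_E m, h]; exact key _ _
  · have := congrArg (coeff m) h4
    rw [coeff_sub, euler, euler, coeff_zero, ← sub_mul] at this
    rcases mul_eq_zero.1 this with h' | h'
    · exact absurd (by exact_mod_cast sub_eq_zero.1 h') h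
    · exact h'

lemma coeff_Q (n a : ℕ) : coeff (E a a 0) (Q ^ n) = if n = a then 1 else 0 := by
  induction n generalizing a with
  | zero =>
    rw [pow_zero, coeff_one]
    congr 1
    apply propext
    constructor
    · intro h; have := DFunLike.congr_fun h 0; simpa [E0] using this
    · rintro rfl; ext i; fin_cases i <;> rfl
  | succ n ih =>
    have : Q ^ (n+1) = X 0 * (X 1 * Q^n) - C (1/2:ℝ) * (X 2 * (X 2 * Q^n)) := by
      rw [pow_succ]; nth_rewrite 2 [Q]; ring
    rw [this, coeff_sub, coeff_C_mul, mul_zero' 2 _ (E2 _ _ _), mul_zero, sub_zero]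
    cases a with
    | zero => rw [mul_zero' 0 _ (E0 _ _ _)]; simp
    | succ a => rw [← add0, mul_pos, ← add1, mul_pos, ih]; simp

lemma dQ0 : pderiv 0 Q = X 1 := by
  simp [Q, pderiv_X]
lemma dQ1 : pderiv 1 Q = X 0 := by
  simp [Q, pderiv_X]
lemma dQ2 : pderiv 2 Q = - X 2 := by
  have : (C (1/2:ℝ) : MvPolynomial (Fin 3) ℝ) * 2 = 1 := by
    rw [show (2 : MvPolynomial (Fin 3) ℝ) = C 2 from (map_ofNat C 2).symm, ← C_mul]; norm_num
  have h : pderiv 2 Q = - (C (1/2:ℝ) * 2 * X 2) := by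
    simp [Q, pderiv_X]; ring
  rw [h, this, one_mul]

lemma dp (i : Fin 3) (p : Polynomial ℝ) :
    pderiv i (Polynomial.aeval Q p) = Polynomial.aeval Q p.derivative * pderiv i Q := by
  rw [Derivation.map_aeval]; rfl

lemma two (p : Polynomial ℝ) : X 2 * pderiv 1 (Polynomial.aeval Q p) +
    X 0 * pderiv 2 (Polynomial.aeval Q p) = 0 := by
  rw [dp, dp, dQ1, dQ2]; ring
lemma three (p : Polynomial ℝ) : X 2 * pderiv 0 (Polynomial.aeval Q p) +
    X 1 * pderiv 2 (Polynomial.aeval Q p) = 0 := by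
  rw [dp, dp, dQ0, dQ2]; ring
lemma four (p : Polynomial ℝ) : X 0 * pderiv 0 (Polynomial.aeval Q p) -
    X 1 * pderiv 1 (Polynomial.aeval Q p) = 0 := by
  rw [dp, dp, dQ1, dQ0]; ring
lemma one' (p : Polynomial ℝ) : MvPolynomial.aeval ![-(X 0), -(X 1), X 2] (Polynomial.aeval Q p) =
    Polynomial.aeval Q p := by
  rw [← Polynomial.aeval_algHom_apply]
  congr 2
  simp [Q, algebraMap_eq]

lemma coeff_aeval (p : Polynomial ℝ) (a : ℕ) :
    coeff (E a a 0) (Polynomial.aeval Q p) = p.coeff a := by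
  rw [Polynomial.aeval_eq_sum_range, coeff_sum]
  simp only [coeff_smul, coeff_Q, smul_eq_mul, mul_ite, mul_one, mul_zero]
  rw [Finset.sum_ite_eq']
  split_ifs with h
  · rfl
  · symm; apply Polynomial.coeff_eq_zero_of_natDegree_lt; simpa using h

lemma exists_p (f : MvPolynomial (Fin 3) ℝ) :
    ∃ p : Polynomial ℝ, ∀ a, p.coeff a = coeff (E a a 0) f := by
  refine ⟨∑ a ∈ Finset.range (f.totalDegree + 1), Polynomial.monomial a (coeff (E a a 0) f), ?_⟩
  intro a
  simp only [Polynomial.finsetSum_coeff, Polynomial.coeff_monomial]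
  rw [Finset.sum_ite_eq']
  split_ifs with h
  · rfl
  · symm
    by_contra hc
    have := le_totalDegree (mem_support_iff.2 hc)
    rw [Finsupp.sum_fintype _ _ (by simp), Fin.sum_univ_three, E0] at this
    simp at h; omega

end PoissonAux

open PoissonAux in
/-- A real polynomial `f ∈ ℝ[x,y,z]` satisfies
(i) `f(-x,-y,z) = f(x,y,z)`, (ii) `z ∂f/∂y + x ∂f/∂z = 0`, (iii) `z ∂f/∂x + y ∂f/∂z = 0`,
(iv) `x ∂f/∂x - y ∂f/∂y = 0`, if and only if `f` is a polynomial in `xy - z²/2`.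
(Variables: `x = X 0`, `y = X 1`, `z = X 2`.) -/
theorem poisson_center_iff_polynomial_in_casimir
    (f : MvPolynomial (Fin 3) ℝ) :
    (MvPolynomial.aeval ![-(X 0), -(X 1), X 2] f = f ∧
     X 2 * MvPolynomial.pderiv 1 f + X 0 * MvPolynomial.pderiv 2 f = 0 ∧
     X 2 * MvPolynomial.pderiv 0 f + X 1 * MvPolynomial.pderiv 2 f = 0 ∧
     X 0 * MvPolynomial.pderiv 0 f - X 1 * MvPolynomial.pderiv 1 f = 0) ↔
    ∃ p : Polynomial ℝ,
      f = Polynomial.aeval (X 0 * X 1 - MvPolynomial.C (1 / 2 : ℝ) * X 2 ^ 2) p := by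
  constructor
  · rintro ⟨-, h2, -, h4⟩
    obtain ⟨p, hp⟩ := exists_p f
    refine ⟨p, ?_⟩
    change f = Polynomial.aeval Q p
    rw [← sub_eq_zero]
    apply vanish
    · rw [map_sub, map_sub]
      linear_combination h2 - two p
    · rw [map_sub, map_sub]
      linear_combination h4 - four p
    · intro a
      rw [coeff_sub, coeff_aeval, hp, sub_self]
  · rintro ⟨p, rfl⟩
    exact ⟨one' p, two p, three p, four p⟩
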